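/- arXiv:1805.08574 — 4 statements merged into one kernel-verified Lean document; each statement's English description precedes it below -/
import Mathlib

section
/- Let W be an m×n real matrix, let x ∈ ℝⁿ, and suppose there exists an index k such that x_k ≠ 0 and W_{jk} ≠ 0 for every row index j. Then for every m×n real matrix G there exist a diagonal n×n matrix D¹ and a diagonal m×m matrix D² such that D² · W · D¹ · x = G · x (where · denotes matrix multiplication / matrix-vector application). -/
/-!
The first diagonal matrix sends `x` to the basis vector `e_k`, so `W` returns its `k`-th column;
having no zero entry, that column can be rescaled entrywise to any vector, in particular to `G x`.
-/

section

open Matrix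

variable {m n K : Type*} [Fintype m] [Fintype n] [DivisionSemiring K]

theorem diagonal_div_mulVec [DecidableEq n] {v w : n → K} (h : ∀ i, v i = 0 → w i = 0) :
    diagonal (w / v) *ᵥ v = w := by
  ext i
  rw [mulVec_diagonal, Pi.div_apply, div_mul_cancel_of_imp (h i)]

theorem io_adaptation_expresses_any_matrix_general (W : Matrix m n K) {x : n → K} {k : n}
    (hx : x k ≠ 0) (hW : ∀ j, W j k ≠ 0) (y : m → K) :
    ∃ (D₁ : Matrix n n K) (D₂ : Matrix m m K),
      D₁.IsDiag ∧ D₂.IsDiag ∧ (D₂ * W * D₁) *ᵥ x = y := by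
  classical
  have hx_single : diagonal (Pi.single k 1 / x) *ᵥ x = Pi.single k 1 :=
    diagonal_div_mulVec fun i hi ↦ Pi.single_eq_of_ne (by rintro rfl; exact hx hi) 1
  have hW_col : diagonal (y / W.col k) *ᵥ W.col k = y :=
    diagonal_div_mulVec fun j hj ↦ absurd hj (hW j)
  refine ⟨diagonal (Pi.single k 1 / x), diagonal (y / W.col k),
    isDiag_diagonal _, isDiag_diagonal _, ?_⟩
  rw [← mulVec_mulVec, hx_single, ← mulVec_mulVec, mulVec_single_one, hW_col]

end

/-- Proposition 1 (existence form): if some coordinate `x k` is nonzero and the `k`-th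
column of `W` is entrywise nonzero, then for any matrix `G` of the same shape as `W`
there exist diagonal matrices `D¹` (n×n) and `D²` (m×m) with `D² W D¹ x = G x`. -/
theorem io_adaptation_expresses_any_matrix
    (m n : ℕ) (W : Matrix (Fin m) (Fin n) ℝ) (x : Fin n → ℝ) (k : Fin n)
    (hx : x k ≠ 0) (hW : ∀ j : Fin m, W j k ≠ 0)
    (G : Matrix (Fin m) (Fin n) ℝ) :
    ∃ (D1 : Matrix (Fin n) (Fin n) ℝ) (D2 : Matrix (Fin m) (Fin m) ℝ),
      D1.IsDiag ∧ D2.IsDiag ∧ (D2 * W * D1).mulVec x = G.mulVec x :=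
  io_adaptation_expresses_any_matrix_general W hx hW (G.mulVec x)
end

section
/- Let W be an m×n real matrix, x ∈ ℝⁿ, and k an index with x_k ≠ 0 and W_{jk} ≠ 0 for every row index j. Let G be any m×n real matrix and set yᴳ = G · x ∈ ℝᵐ. Define D¹ to be the n×n diagonal matrix whose (k,k) entry is 1/x_k and whose other diagonal entries are 0, and define D² to be the m×m diagonal matrix whose (j,j) entry is yᴳ_j / W_{jk}. Then D² · W · D¹ · x = yᴳ. -/
open Matrix

section

variable {m n K : Type*} [Fintype m] [DecidableEq m] [Fintype n] [DecidableEq n]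
  [DivisionSemiring K]

theorem diagonal_single_inv_mulVec_self {x : n → K} {k : n} (hx : x k ≠ 0) :
    diagonal (Pi.single k (x k)⁻¹) *ᵥ x = Pi.single k 1 := by
  rw [diagonal_single, single_mulVec_eq, inv_mul_cancel₀ hx, one_smul]

theorem diagonal_div_mulVec_self (y : m → K) {v : m → K} (hv : ∀ j, v j ≠ 0) :
    diagonal (fun j => y j / v j) *ᵥ v = y := by
  ext j
  rw [mulVec_diagonal, div_mul_cancel₀ _ (hv j)]

theorem io_adaptation_explicit_construction_general
    (W : Matrix m n K) {x : n → K} {k : n} (hx : x k ≠ 0) (hW : ∀ j, W j k ≠ 0) (y : m → K) :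
    (diagonal (fun j => y j / W j k) * W * diagonal (Pi.single k (x k)⁻¹)) *ᵥ x = y :=
  calc
    _ = diagonal (fun j => y j / W j k) *ᵥ W *ᵥ diagonal (Pi.single k (x k)⁻¹) *ᵥ x := by
      simp only [mulVec_mulVec, Matrix.mul_assoc]
    _ = diagonal (fun j => y j / W j k) *ᵥ W.col k := by
      rw [diagonal_single_inv_mulVec_self hx, mulVec_single_one]
    _ = y := diagonal_div_mulVec_self y hW

end

/-- The explicit construction in the proof of Proposition 1: with
`D¹ = diag(…, 1/x_k at position k, 0 elsewhere)` and `D² = diag(yᴳ_j / W_{jk})`,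
one gets `D² W D¹ x = yᴳ = G x`. -/
theorem io_adaptation_explicit_construction
    (m n : ℕ) (W : Matrix (Fin m) (Fin n) ℝ) (x : Fin n → ℝ) (k : Fin n)
    (hx : x k ≠ 0) (hW : ∀ j : Fin m, W j k ≠ 0)
    (G : Matrix (Fin m) (Fin n) ℝ) :
    let yG : Fin m → ℝ := G.mulVec x
    let D1 : Matrix (Fin n) (Fin n) ℝ :=
      Matrix.diagonal (fun i => if i = k then 1 / x k else 0)
    let D2 : Matrix (Fin m) (Fin m) ℝ :=
      Matrix.diagonal (fun j => yG j / W j k)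
    (D2 * W * D1).mulVec x = yG := by
  simpa only [← Pi.single_apply, one_div] using
    io_adaptation_explicit_construction_general W hx hW (G.mulVec x)
end

section
/- Let W be an m×n real matrix and x ∈ ℝⁿ, and suppose there exists an index k such that x_k ≠ 0 and W_{jk} ≠ 0 for every row index j. Then for every target vector y ∈ ℝᵐ there exist a diagonal n×n matrix D¹ and a diagonal m×m matrix D² such that D² · W · D¹ · x = y. In other words, the map G ↦ D² W D¹ realizes every possible output vector at x, so IO-adaptation can express any mapping from the input x to the output space ℝᵐ. -/
/-! Let `D¹` erase every coordinate of `x` except the `k`-th. Then `W D¹ x` is `x k` times the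
`k`-th column of `W`, a vector without zero entries, and `D²` rescales it entrywise to `y`. -/

open Matrix

section

variable {m n : Type*} [Fintype n]

theorem diagonal_single_mulVec {R : Type*} [NonUnitalNonAssocSemiring R] [DecidableEq n]
    (k : n) (a : R) (x : n → R) :
    diagonal (Pi.single k a) *ᵥ x = Pi.single k (a * x k) := by
  rw [diagonal_single, single_mulVec, Pi.single]

variable {K : Type*} [DivisionSemiring K]

theorem diagonal_div_mulVec_cancel [DecidableEq n] {v : n → K} (hv : ∀ i, v i ≠ 0)
    (y : n → K) : diagonal (y / v) *ᵥ v = y := by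
  ext i
  rw [mulVec_diagonal, Pi.div_apply, div_mul_cancel₀ _ (hv i)]

theorem io_adaptation_realizes_any_vector_general [Fintype m] (W : Matrix m n K) {x : n → K}
    {k : n} (hx : x k ≠ 0) (hW : ∀ j, W j k ≠ 0) (y : m → K) :
    ∃ (D1 : Matrix n n K) (D2 : Matrix m m K),
      D1.IsDiag ∧ D2.IsDiag ∧ (D2 * W * D1) *ᵥ x = y := by
  classical
  let D1 : Matrix n n K := diagonal (Pi.single k 1)
  let v : m → K := W *ᵥ (D1 *ᵥ x)
  have hv (j : m) : v j = W j k * x k := by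
    simp only [v, D1, diagonal_single_mulVec, one_mul, mulVec, dotProduct_single]
  have hv_ne (j : m) : v j ≠ 0 := hv j ▸ mul_ne_zero (hW j) hx
  refine ⟨D1, diagonal (y / v), isDiag_diagonal _, isDiag_diagonal _, ?_⟩
  calc (diagonal (y / v) * W * D1) *ᵥ x
    _ = diagonal (y / v) *ᵥ v := by rw [← mulVec_mulVec, ← mulVec_mulVec]
    _ = y := diagonal_div_mulVec_cancel hv_ne y

end

/-- Vector-target form of Proposition 1: under the same hypotheses on `x` and the
`k`-th column of `W`, every target vector `y ∈ ℝᵐ` is realized as `D² W D¹ x` for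
some diagonal matrices `D¹`, `D²`. -/
theorem io_adaptation_realizes_any_vector
    (m n : ℕ) (W : Matrix (Fin m) (Fin n) ℝ) (x : Fin n → ℝ) (k : Fin n)
    (hx : x k ≠ 0) (hW : ∀ j : Fin m, W j k ≠ 0)
    (y : Fin m → ℝ) :
    ∃ (D1 : Matrix (Fin n) (Fin n) ℝ) (D2 : Matrix (Fin m) (Fin m) ℝ),
      D1.IsDiag ∧ D2.IsDiag ∧ (D2 * W * D1).mulVec x = y :=
  io_adaptation_realizes_any_vector_general W hx hW y
end

section
/- Let W be an m×n real matrix and x ∈ ℝⁿ with x ≠ 0, and suppose every column of W has all entries nonzero. Then for any two m×n real matrices G and G′ with G · x ≠ G′ · x, any diagonal pairs (D¹, D²) and (E¹, E²) realizing them (i.e., D² W D¹ x = G x and E² W E¹ x = G′ x) must be distinct as pairs; moreover both such pairs exist. Hence the assignment of adaptation parameters separates points of the image space: distinct target outputs G x ≠ G′ x are realized by necessarily distinct diagonal parameter pairs, and every target in ℝᵐ is realized. -/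
/-! If `x k ≠ 0`, an input matrix that keeps only the `k`-th coordinate turns `W D₁ x` into a
multiple of the `k`-th column of `W`. That vector has no zero entry, so a diagonal rescaling of
the output carries it to any target. -/

section Realization

open Matrix

variable {m n K : Type*} [Fintype m] [Fintype n]

theorem exists_diagonal_mulVec_eq [DecidableEq m] [DivisionSemiring K] {v : m → K}
    (hv : ∀ j, v j ≠ 0) (y : m → K) : ∃ c : m → K, diagonal c *ᵥ v = y := by
  refine ⟨fun j ↦ y j / v j, ?_⟩
  ext j
  rw [mulVec_diagonal, div_mul_cancel₀ _ (hv j)]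

theorem diagonal_single_one_mulVec [DecidableEq n] [NonAssocSemiring K] (k : n) (x : n → K) :
    diagonal (Pi.single k 1) *ᵥ x = Pi.single k (x k) := by
  ext i
  rw [mulVec_diagonal, ← Pi.single_mul_left_apply, one_mul]

theorem exists_isDiag_mul_mul_mulVec_eq [DivisionSemiring K] {W : Matrix m n K} {x : n → K}
    {k : n} (hx : x k ≠ 0) (hW : ∀ j, W j k ≠ 0) (y : m → K) :
    ∃ (D₁ : Matrix n n K) (D₂ : Matrix m m K),
      D₁.IsDiag ∧ D₂.IsDiag ∧ (D₂ * W * D₁) *ᵥ x = y := by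
  classical
  have hcol : ∀ j, (W *ᵥ Pi.single k (x k)) j ≠ 0 := fun j ↦ by simp [hW j, hx]
  obtain ⟨c, hc⟩ := exists_diagonal_mulVec_eq hcol y
  refine ⟨diagonal (Pi.single k 1), diagonal c, isDiag_diagonal _, isDiag_diagonal _, ?_⟩
  rw [← mulVec_mulVec, ← mulVec_mulVec, diagonal_single_one_mulVec, hc]

theorem io_adaptation_separates_and_realizes_general [DivisionSemiring K] {W : Matrix m n K}
    {x : n → K} {k : n} (hx : x k ≠ 0) (hW : ∀ j, W j k ≠ 0) {y y' : m → K} (hy : y ≠ y') :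
    (∀ (D₁ E₁ : Matrix n n K) (D₂ E₂ : Matrix m m K),
      (D₂ * W * D₁) *ᵥ x = y → (E₂ * W * E₁) *ᵥ x = y' → (D₁, D₂) ≠ (E₁, E₂)) ∧
    (∃ (D₁ : Matrix n n K) (D₂ : Matrix m m K),
      D₁.IsDiag ∧ D₂.IsDiag ∧ (D₂ * W * D₁) *ᵥ x = y) ∧
    (∃ (E₁ : Matrix n n K) (E₂ : Matrix m m K),
      E₁.IsDiag ∧ E₂.IsDiag ∧ (E₂ * W * E₁) *ᵥ x = y') := by
  refine ⟨?_, exists_isDiag_mul_mul_mulVec_eq hx hW y, exists_isDiag_mul_mul_mulVec_eq hx hW y'⟩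
  rintro D₁ E₁ D₂ E₂ hD hE hDE
  obtain ⟨rfl, rfl⟩ := Prod.mk.inj hDE
  exact hy (hD.symm.trans hE)

end Realization

/-- Separation and realizability: if `x ≠ 0` and every entry of `W` is nonzero, then for
any `G`, `G'` with `G x ≠ G' x`, any diagonal pairs realizing `G x` and `G' x`
respectively must be distinct as pairs, and both such pairs exist. -/
theorem io_adaptation_separates_and_realizes
    (m n : ℕ) (W : Matrix (Fin m) (Fin n) ℝ) (x : Fin n → ℝ)
    (hx : x ≠ 0) (hW : ∀ (j : Fin m) (k : Fin n), W j k ≠ 0)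
    (G G' : Matrix (Fin m) (Fin n) ℝ) (hGG' : G.mulVec x ≠ G'.mulVec x) :
    (∀ (D1 E1 : Matrix (Fin n) (Fin n) ℝ) (D2 E2 : Matrix (Fin m) (Fin m) ℝ),
      D1.IsDiag → D2.IsDiag → E1.IsDiag → E2.IsDiag →
      (D2 * W * D1).mulVec x = G.mulVec x →
      (E2 * W * E1).mulVec x = G'.mulVec x →
      (D1, D2) ≠ (E1, E2)) ∧
    (∃ (D1 : Matrix (Fin n) (Fin n) ℝ) (D2 : Matrix (Fin m) (Fin m) ℝ),
      D1.IsDiag ∧ D2.IsDiag ∧ (D2 * W * D1).mulVec x = G.mulVec x) ∧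
    (∃ (E1 : Matrix (Fin n) (Fin n) ℝ) (E2 : Matrix (Fin m) (Fin m) ℝ),
      E1.IsDiag ∧ E2.IsDiag ∧ (E2 * W * E1).mulVec x = G'.mulVec x) := by
  obtain ⟨k, hk⟩ := Function.ne_iff.mp hx
  exact (io_adaptation_separates_and_realizes_general hk (hW · k) hGG').imp_left
    fun hsep D1 E1 D2 E2 _ _ _ _ ↦ hsep D1 E1 D2 E2
end
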